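/- The divided difference satisfies the Hermite integral representation: for a function f that is n times continuously differentiable on ℝ and any points x_0,...,x_n ∈ ℝ, f[x_0,...,x_n] = ∫_{Δ_n} f^{(n)}(s_0 x_0 + s_1 x_1 + ⋯ + s_n x_n) d^n s, where Δ_n is the standard n-simplex {s_i ≥ 0, ∑ s_i = 1}. -/

import Mathlib

open MeasureTheory

/-- The divided difference, defined recursively (for distinct points). -/
noncomputable def divDiffRec (f : ℝ → ℝ) : (n : ℕ) → (Fin (n + 1) → ℝ) → ℝ
  | 0, x => f (x 0)
  | n + 1, x =>
      (divDiffRec f n (fun i => x i.succ) - divDiffRec f n (fun i => x i.castSucc)) /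
        (x (Fin.last (n + 1)) - x 0)

/-- The Lagrange (symmetric) form of the divided difference. -/
noncomputable def lagDD (f : ℝ → ℝ) (S : Finset ℝ) : ℝ :=
  ∑ a ∈ S, f a * ∏ b ∈ S.erase a, (a - b)⁻¹

theorem lagDD_rec (f : ℝ → ℝ) (S : Finset ℝ) (a b : ℝ) (ha : a ∈ S) (hb : b ∈ S) :
    (a - b) * lagDD f S = lagDD f (S.erase b) - lagDD f (S.erase a) := by
  have key : ∀ c ∈ S, lagDD f (S.erase c)
      = ∑ k ∈ S, f k * ((k - c) * ∏ j ∈ S.erase k, (k - j)⁻¹) := by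
    intro c hc
    unfold lagDD
    rw [← Finset.add_sum_erase S _ hc]
    simp only [sub_self, zero_mul, mul_zero, zero_add]
    refine Finset.sum_congr rfl fun k hk => ?_
    have hkc : k ≠ c := Finset.ne_of_mem_erase hk
    have hc' : c ∈ S.erase k := Finset.mem_erase.2 ⟨hkc.symm, hc⟩
    rw [← Finset.mul_prod_erase (S.erase k) _ hc', ← mul_assoc (k - c),
      mul_inv_cancel₀ (sub_ne_zero.2 hkc), one_mul, Finset.erase_right_comm]
  rw [key a ha, key b hb, ← Finset.sum_sub_distrib, lagDD, Finset.mul_sum]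
  refine Finset.sum_congr rfl fun k _ => ?_
  ring

theorem image_erase {n : ℕ} (x : Fin (n + 2) → ℝ) (hx : Function.Injective x) (p : Fin (n + 2)) :
    Finset.univ.image (fun i : Fin (n + 1) => x (p.succAbove i))
      = (Finset.univ.image x).erase (x p) := by
  ext y
  simp only [Finset.mem_image, Finset.mem_univ, true_and, Finset.mem_erase]
  constructor
  · rintro ⟨i, rfl⟩
    exact ⟨fun h => Fin.succAbove_ne p i (hx h), _, rfl⟩
  · rintro ⟨h, j, rfl⟩
    obtain ⟨i, hi⟩ := Fin.exists_succAbove_eq (x := j) (y := p) (fun h' => h (by rw [h']))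
    exact ⟨i, by rw [hi]⟩

theorem lagDD_rec' (f : ℝ → ℝ) {n : ℕ} (x : Fin (n + 2) → ℝ) (hx : Function.Injective x)
    (p q : Fin (n + 2)) :
    (x p - x q) * lagDD f (Finset.univ.image x)
      = lagDD f (Finset.univ.image fun i : Fin (n + 1) => x (q.succAbove i))
        - lagDD f (Finset.univ.image fun i : Fin (n + 1) => x (p.succAbove i)) := by
  rw [image_erase x hx, image_erase x hx]
  exact lagDD_rec f _ _ _ (by simp) (by simp)

theorem divDiffRec_eq (f : ℝ → ℝ) (n : ℕ) (x : Fin (n + 1) → ℝ) (hx : Function.Injective x) :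
    divDiffRec f n x = lagDD f (Finset.univ.image x) := by
  induction n with
  | zero => simp [divDiffRec, lagDD]
  | succ n ih =>
    have hne : x (Fin.last (n + 1)) - x 0 ≠ 0 := sub_ne_zero.2 fun h => by
      have := hx h
      simp [Fin.ext_iff] at this
    rw [divDiffRec, ih (fun i => x i.succ) (hx.comp (Fin.succ_injective _)),
      ih (fun i => x i.castSucc) (hx.comp (Fin.castSucc_injective _)), div_eq_iff hne, mul_comm, lagDD_rec' f x hx]
    simp

/-- The solid simplex. -/
def Simp (n : ℕ) : Set (Fin n → ℝ) := {s | (∀ i, 0 ≤ s i) ∧ ∑ i, s i ≤ 1}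

theorem Simp_closed (n : ℕ) : IsClosed (Simp n) := by
  have h1 : IsClosed {s : Fin n → ℝ | ∀ i, 0 ≤ s i} := by
    rw [Set.ofPred_forall]
    exact isClosed_iInter fun i => isClosed_le continuous_const (continuous_apply i)
  have h2 : IsClosed {s : Fin n → ℝ | ∑ i, s i ≤ 1} :=
    isClosed_le (by fun_prop) continuous_const
  exact h1.inter h2

theorem Simp_compact (n : ℕ) : IsCompact (Simp n) := by
  refine IsCompact.of_isClosed_subset (isCompact_Icc (a := (0 : Fin n → ℝ)) (b := 1))
    (Simp_closed n) ?_
  rintro s ⟨h0, h1⟩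
  refine ⟨fun i => h0 i, fun i => ?_⟩
  exact (Finset.single_le_sum (fun j _ => h0 j) (Finset.mem_univ i)).trans h1

theorem integral_split (n : ℕ) (g : (Fin (n + 1) → ℝ) → ℝ) (hg : Continuous g) :
    ∫ s in Simp (n + 1), g s =
      ∫ s in Simp n, ∫ t in (0 : ℝ)..(1 - ∑ i, s i), g (Fin.cons t s) := by
  have hint : Integrable ((Simp (n + 1)).indicator g) :=
    (integrable_indicator_iff (Simp_closed _).measurableSet).2
      (hg.continuousOn.integrableOn_compact (Simp_compact _))
  have mp := (volume_preserving_piFinSuccAbove (fun _ : Fin (n + 1) => ℝ) 0).symm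
  rw [← integral_indicator (Simp_closed _).measurableSet,
    ← integral_indicator (Simp_closed _).measurableSet, ← mp.integral_comp']
  have hint' := (mp.integrable_comp_emb (MeasurableEquiv.measurableEmbedding _)).2 hint
  rw [Measure.volume_eq_prod] at hint' ⊢
  refine (integral_prod_symm _ hint').trans ?_
  refine integral_congr_ae (Filter.Eventually.of_forall fun s => ?_)
  have hsym : ∀ t : ℝ, (MeasurableEquiv.piFinSuccAbove (fun _ : Fin (n + 1) => ℝ) 0).symm (t, s)
      = (Fin.cons t s : Fin (n + 1) → ℝ) := by
    intro t
    simp [MeasurableEquiv.piFinSuccAbove]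
    rfl
  have hmem : ∀ t : ℝ, (Fin.cons t s : Fin (n + 1) → ℝ) ∈ Simp (n + 1) ↔
      (s ∈ Simp n ∧ t ∈ Set.Icc 0 (1 - ∑ i, s i)) := by
    intro t
    simp only [Simp, Set.mem_ofPred_eq, Fin.forall_fin_succ, Fin.sum_univ_succ, Fin.cons_zero,
      Fin.cons_succ, Set.mem_Icc]
    constructor
    · rintro ⟨⟨h1, h2⟩, h3⟩
      exact ⟨⟨h2, by linarith⟩, h1, by linarith⟩
    · rintro ⟨⟨h1, h2⟩, h3, h4⟩
      exact ⟨⟨h3, h1⟩, by linarith⟩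
  simp only [Function.comp_apply, hsym]
  by_cases hs : s ∈ Simp n
  · rw [Set.indicator_of_mem hs, intervalIntegral.integral_of_le (by linarith [hs.2]),
      ← integral_Icc_eq_integral_Ioc, ← integral_indicator measurableSet_Icc]
    congr 1
    ext t
    by_cases ht : t ∈ Set.Icc 0 (1 - ∑ i, s i)
    · rw [Set.indicator_of_mem ht, Set.indicator_of_mem ((hmem t).2 ⟨hs, ht⟩)]
    · rw [Set.indicator_of_notMem ht, Set.indicator_of_notMem fun h => ht ((hmem t).1 h).2]
  · rw [Set.indicator_of_notMem hs]
    have : ∀ t : ℝ, (Simp (n + 1)).indicator g (Fin.cons t s : Fin (n + 1) → ℝ) = 0 := fun t =>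
      Set.indicator_of_notMem (fun h => hs ((hmem t).1 h).1) _
    simp [this]

/-- The Hermite integral. -/
noncomputable def herm (n : ℕ) (G : ℝ → ℝ) (x : Fin (n + 1) → ℝ) : ℝ :=
  ∫ s in Simp n, G ((1 - ∑ i, s i) * x 0 + ∑ i : Fin n, s i * x i.succ)

theorem herm_rec (n : ℕ) (G : ℝ → ℝ) (hG : ContDiff ℝ 1 G) (x : Fin (n + 2) → ℝ) :
    (x 1 - x 0) * herm (n + 1) (deriv G) x =
      herm n G (fun i => x ((0 : Fin (n + 2)).succAbove i))
        - herm n G (fun i => x ((1 : Fin (n + 2)).succAbove i)) := by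
  have hG' : Continuous (deriv G) := hG.continuous_deriv le_rfl
  have hGc : Continuous G := hG.continuous
  have hGd : Differentiable ℝ G := hG.differentiable one_ne_zero
  unfold herm
  rw [integral_split n _ (by fun_prop), ← integral_const_mul, ← integral_sub]
  · refine integral_congr_ae (Filter.Eventually.of_forall fun s => ?_)
    simp only [Fin.sum_univ_succ (n := n), Fin.cons_zero, Fin.cons_succ]
    rw [← intervalIntegral.integral_const_mul]
    have hd : ∀ t ∈ Set.uIcc (0 : ℝ) (1 - ∑ i, s i),
        HasDerivAt (fun t : ℝ => G ((1 - (t + ∑ i, s i)) * x 0 +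
          (t * x (Fin.succ 0) + ∑ i : Fin n, s i * x i.succ.succ)))
        ((x 1 - x 0) * deriv G ((1 - (t + ∑ i, s i)) * x 0 +
          (t * x (Fin.succ 0) + ∑ i : Fin n, s i * x i.succ.succ))) t := by
      intro t _
      have h1 : HasDerivAt (fun t : ℝ => (1 - (t + ∑ i, s i)) * x 0 +
          (t * x (Fin.succ 0) + ∑ i : Fin n, s i * x i.succ.succ)) (x 1 - x 0) t := by
        have := ((((hasDerivAt_id t).add_const (∑ i, s i)).const_sub 1).mul_const (x 0)).add
          (((hasDerivAt_id t).mul_const (x (Fin.succ 0))).add_const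
            (∑ i : Fin n, s i * x i.succ.succ))
        refine this.congr_deriv ?_
        rw [show (Fin.succ 0 : Fin (n + 2)) = 1 from rfl]
        ring
      have h2 := (hGd _).hasDerivAt.comp t h1
      rw [mul_comm] at h2
      exact h2
    rw [intervalIntegral.integral_eq_sub_of_hasDerivAt hd
      (Continuous.intervalIntegrable (by fun_prop) _ _)]
    have e0 : (1 : Fin (n + 2)).succAbove 0 = 0 := by simp
    have e1 : ∀ i : Fin n, (1 : Fin (n + 2)).succAbove i.succ = i.succ.succ := by
      intro i
      exact Fin.succ_succAbove_succ (0 : Fin (n + 1)) i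
    simp only [e0, e1, Fin.succAbove_zero]
    congr 2 <;> ring
  · exact ContinuousOn.integrableOn_compact (Simp_compact n) (Continuous.continuousOn (by fun_prop))
  · exact ContinuousOn.integrableOn_compact (Simp_compact n) (Continuous.continuousOn (by fun_prop))

theorem herm_eq (n : ℕ) (f : ℝ → ℝ) (hf : ContDiff ℝ n f) (x : Fin (n + 1) → ℝ)
    (hx : Function.Injective x) :
    herm n (iteratedDeriv n f) x = lagDD f (Finset.univ.image x) := by
  induction n with
  | zero =>
    have : Simp 0 = Set.univ := by ext s; simp [Simp]
    simp [herm, lagDD, this, Measure.real, volume_pi]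
  | succ n ih =>
    have hne : x 1 - x 0 ≠ 0 := sub_ne_zero.2 fun h => by
      have := hx h
      simp [Fin.ext_iff] at this
    have hfn : ContDiff ℝ n f := hf.of_le (by exact_mod_cast Nat.le_succ n)
    have hG : ContDiff ℝ 1 (iteratedDeriv n f) := by
      rw [iteratedDeriv_eq_iterate]
      exact ContDiff.iterate_deriv' 1 n (by rw [add_comm]; exact_mod_cast hf)
    apply mul_left_cancel₀ hne
    rw [lagDD_rec' f x hx, iteratedDeriv_succ, herm_rec n _ hG,
      ih hfn (fun i => x ((0 : Fin (n + 2)).succAbove i)) (hx.comp Fin.succAbove_right_injective),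
      ih hfn (fun i => x ((1 : Fin (n + 2)).succAbove i)) (hx.comp Fin.succAbove_right_injective)]

/-- Hermite's integral representation of the divided difference:
`f[x₀,…,xₙ] = ∫_{Δₙ} f⁽ⁿ⁾(s₀x₀ + ⋯ + sₙxₙ) dⁿs`, where the `n`-simplex is
parametrized by `(s₁,…,sₙ)` with `s₀ = 1 - ∑ sᵢ`. -/
theorem hermite_representation (n : ℕ) (f : ℝ → ℝ) (hf : ContDiff ℝ n f)
    (x : Fin (n + 1) → ℝ) (hx : Function.Injective x) :
    divDiffRec f n x =
      ∫ s in {s : Fin n → ℝ | (∀ i, 0 ≤ s i) ∧ ∑ i, s i ≤ 1},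
        iteratedDeriv n f ((1 - ∑ i, s i) * x 0 + ∑ i : Fin n, s i * x i.succ) := by
  rw [divDiffRec_eq f n x hx, ← herm_eq n f hf x hx]
  rfl
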